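/- arXiv:1409.5691 — 2 statements merged into one kernel-verified Lean document; each statement's English description precedes it below -/
import Mathlib

section
/- The configuration of points off the binary Klein quadric and lines external to it is isomorphic to the combinatorial Grassmannian G₂(8): there exists a bijection f from {v : Fin 6 → ZMod 2 | v ≠ 0 ∧ Q v = 1} to the 2-element subsets of Fin 8 such that for all pairwise distinct off-quadric points a, b, c, one has a + b + c = 0 if and only if the union f(a) ∪ f(b) ∪ f(c) has cardinality 3. -/
/-- The hyperbolic quadratic form on GF(2)^6. -/
def Q (v : Fin 6 → ZMod 2) : ZMod 2 := v 0 * v 1 + v 2 * v 3 + v 4 * v 5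

/-!
Choose eight vectors `pᵢ` whose pairwise sums lie off the quadric, and send the pair `{i, j}` to
`pᵢ + pⱼ`. If `S` and `T` have even size, the polar form of `∑ i ∈ S, pᵢ` and `∑ j ∈ T, pⱼ` is
`|S ∩ T|` mod 2; testing against pairs `T` that meet `S` in one index shows that `∑ i ∈ S, pᵢ`
vanishes, for `S` even and not the whole index set, only if `S` is empty. So distinct pairs give
distinct points, and since there are 28 of both this is a bijection. As symmetric differences turn
into sums, three pairs give collinear points exactly when each is the symmetric difference of the
other two, that is, when they are the edges of a triangle.
-/

open Finset
open scoped symmDiff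

section SymmDiff

variable {α : Type*} [DecidableEq α] {s t u : Finset α}

theorem sum_symmDiff_add_two_nsmul_sum_inter {M : Type*} [AddCommMonoid M] (s t : Finset α)
    (f : α → M) :
    ∑ i ∈ s ∆ t, f i + 2 • ∑ i ∈ s ∩ t, f i = ∑ i ∈ s, f i + ∑ i ∈ t, f i := by
  have hs := sum_inter_add_sum_sdiff s t f
  have ht := sum_inter_add_sum_sdiff t s f
  rw [inter_comm] at ht
  rw [← hs, ← ht, Finset.symmDiff_def, sum_union disjoint_sdiff_sdiff, two_nsmul]
  abel

theorem card_symmDiff_add_two_mul_card_inter (s t : Finset α) :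
    #(s ∆ t) + 2 * #(s ∩ t) = #s + #t := by
  simpa only [card_eq_sum_ones, two_nsmul, two_mul] using
    sum_symmDiff_add_two_nsmul_sum_inter s t fun _ ↦ 1

theorem even_card_symmDiff (hs : Even #s) (ht : Even #t) : Even #(s ∆ t) := by
  have := card_symmDiff_add_two_mul_card_inter s t
  grind

theorem sum_symmDiff_of_zmod_two {M : Type*} [AddCommGroup M] [Module (ZMod 2) M]
    (s t : Finset α) (f : α → M) :
    ∑ i ∈ s ∆ t, f i = ∑ i ∈ s, f i + ∑ i ∈ t, f i := by
  rw [← sum_symmDiff_add_two_nsmul_sum_inter, two_nsmul, ZModModule.add_self, add_zero]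

theorem symmDiff_subset_of_card_union_le (hs : #s = 2) (ht : #t = 2) (hu : #u = 2)
    (hsu : s ≠ u) (htu : t ≠ u) (h : #(s ∪ t ∪ u) ≤ 3) : s ∆ t ⊆ u := by
  intro x hx
  by_contra hxu
  have hx_union : x ∈ s ∪ t ∪ u := mem_union_left u (symmDiff_subset_union hx)
  have eq_erase {v : Finset α} (hv : #v = 2) (hvw : v ⊆ s ∪ t ∪ u) (hxv : x ∉ v) :
      v = (s ∪ t ∪ u).erase x := by
    refine eq_of_subset_of_card_le (subset_erase.2 ⟨hvw, hxv⟩) ?_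
    rw [card_erase_of_mem hx_union]
    omega
  have hu_eq := eq_erase hu subset_union_right hxu
  rcases mem_symmDiff.1 hx with ⟨-, hxt⟩ | ⟨-, hxs⟩
  · exact htu ((eq_erase ht (by grind) hxt).trans hu_eq.symm)
  · exact hsu ((eq_erase hs (by grind) hxs).trans hu_eq.symm)

theorem symmDiff_eq_iff_card_union_eq_three (hs : #s = 2) (ht : #t = 2) (hu : #u = 2)
    (hst : s ≠ t) (hsu : s ≠ u) (htu : t ≠ u) : s ∆ t = u ↔ #(s ∪ t ∪ u) = 3 := by
  have hcard := card_symmDiff_add_two_mul_card_inter s t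
  constructor
  · rintro rfl
    have hunion := card_union_add_card_inter s t
    rw [union_eq_left.2 symmDiff_subset_union]
    omega
  · intro h
    have hpos : 0 < #(s ∆ t) := card_pos.2 (symmDiff_nonempty.2 hst)
    exact eq_of_subset_of_card_le
      (symmDiff_subset_of_card_union_le hs ht hu hsu htu h.le) (by omega)

end SymmDiff

/-- A family of vectors over GF(2) any two of which sum to a vector off the quadric `q = 0`. The
vectors themselves may be `0` or lie on the quadric. -/
def HasOffQuadricSums {ι V : Type*} [AddCommGroup V] [Module (ZMod 2) V]
    (q : QuadraticForm (ZMod 2) V) (p : ι → V) : Prop :=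
  Pairwise fun i j ↦ q (p i + p j) = 1

namespace HasOffQuadricSums

variable {ι V : Type*} [AddCommGroup V] [Module (ZMod 2) V]
  {q : QuadraticForm (ZMod 2) V} {p : ι → V} {s t u : Finset ι}

theorem polarBilin_apply_apply [DecidableEq ι] (hp : HasOffQuadricSums q p) (i j : ι) :
    q.polarBilin (p i) (p j) = 1 + q (p i) + q (p j) + if i = j then 1 else 0 := by
  rcases eq_or_ne i j with rfl | hij
  · rw [if_pos rfl, QuadraticMap.polarBilin_apply_apply, QuadraticMap.polar_self, CharTwo.two_nsmul]
    grind
  · rw [if_neg hij, QuadraticMap.polarBilin_apply_apply, QuadraticMap.polar, hp hij]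
    simp only [CharTwo.sub_eq_add, add_zero]

theorem polarBilin_sum_sum [DecidableEq ι] (hp : HasOffQuadricSums q p) (hs : Even #s)
    (ht : Even #t) : q.polarBilin (∑ i ∈ s, p i) (∑ j ∈ t, p j) = #(s ∩ t) := by
  have hs' : (#s : ZMod 2) = 0 := (ZMod.natCast_eq_zero_iff_even).2 hs
  have ht' : (#t : ZMod 2) = 0 := (ZMod.natCast_eq_zero_iff_even).2 ht
  calc q.polarBilin (∑ i ∈ s, p i) (∑ j ∈ t, p j)
      = ∑ j ∈ t, ∑ i ∈ s, (1 + q (p i) + q (p j) + if i = j then 1 else 0) := by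
        simp only [map_sum, LinearMap.sum_apply, hp.polarBilin_apply_apply]
    _ = ∑ j ∈ t, if j ∈ s then 1 else 0 := by
        simp only [sum_add_distrib, sum_const, nsmul_eq_mul, hs', ht', zero_mul, zero_add,
          sum_ite_eq']
    _ = #(s ∩ t) := by rw [sum_boole, filter_mem_eq_inter, inter_comm]

theorem sum_pair_off (hp : HasOffQuadricSums q p) (hs : #s = 2) : q (∑ i ∈ s, p i) = 1 := by
  classical
  obtain ⟨i, j, hij, rfl⟩ := card_eq_two.1 hs
  rw [sum_pair hij]
  exact hp hij

variable [Fintype ι]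

theorem sum_eq_zero_iff (hp : HasOffQuadricSums q p) (hs : Even #s) (hs_univ : s ≠ univ) :
    ∑ i ∈ s, p i = 0 ↔ s = ∅ := by
  classical
  refine ⟨fun hsum ↦ ?_, fun h ↦ by rw [h, sum_empty]⟩
  by_contra hne
  obtain ⟨i, hi⟩ := nonempty_iff_ne_empty.2 hne
  obtain ⟨m, hm⟩ : ∃ m, m ∉ s := by simpa [eq_univ_iff_forall] using hs_univ
  have him : i ≠ m := ne_of_mem_of_not_mem hi hm
  have hinter : s ∩ {i, m} = {i} := by grind
  have hpolar := hp.polarBilin_sum_sum hs (t := {i, m}) (by simp [card_pair him])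
  simp [hsum, hinter] at hpolar

theorem sum_eq_sum_iff [DecidableEq ι] (hp : HasOffQuadricSums q p) (hs : Even #s) (ht : Even #t)
    (hst : s ∆ t ≠ univ) : ∑ i ∈ s, p i = ∑ i ∈ t, p i ↔ s = t := by
  rw [← symmDiff_eq_empty, ← hp.sum_eq_zero_iff (even_card_symmDiff hs ht) hst,
    sum_symmDiff_of_zmod_two, ← ZModModule.sub_eq_add, sub_eq_zero]

theorem sum_add_sum_add_sum_eq_zero_iff [DecidableEq ι] (hp : HasOffQuadricSums q p)
    (hs : Even #s) (ht : Even #t) (hu : Even #u) (hstu : s ∆ t ∆ u ≠ univ) :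
    ∑ i ∈ s, p i + ∑ i ∈ t, p i + ∑ i ∈ u, p i = 0 ↔ s ∆ t = u := by
  rw [← hp.sum_eq_sum_iff (even_card_symmDiff hs ht) hu hstu, sum_symmDiff_of_zmod_two,
    ← ZModModule.sub_eq_add (_ + _), sub_eq_zero]

theorem sum_injOn_pairs (hp : HasOffQuadricSums q p) (hι : 4 < Fintype.card ι) :
    Set.InjOn (fun s : Finset ι ↦ ∑ i ∈ s, p i) {s | #s = 2} := by
  classical
  intro s (hs : #s = 2) t (ht : #t = 2) hsum
  have hcard := card_symmDiff_add_two_mul_card_inter s t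
  have hst : s ∆ t ≠ univ := (card_lt_iff_ne_univ _).1 (by omega)
  exact (hp.sum_eq_sum_iff (hs ▸ even_two) (ht ▸ even_two) hst).1 hsum

theorem sum_pairs_collinear_iff [DecidableEq ι] (hp : HasOffQuadricSums q p)
    (hι : 6 < Fintype.card ι) (hs : #s = 2) (ht : #t = 2) (hu : #u = 2)
    (hst : s ≠ t) (hsu : s ≠ u) (htu : t ≠ u) :
    ∑ i ∈ s, p i + ∑ i ∈ t, p i + ∑ i ∈ u, p i = 0 ↔ #(s ∪ t ∪ u) = 3 := by
  have hcard := card_symmDiff_add_two_mul_card_inter s t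
  have hcard' := card_symmDiff_add_two_mul_card_inter (s ∆ t) u
  have hstu : s ∆ t ∆ u ≠ univ := (card_lt_iff_ne_univ _).1 (by omega)
  rw [hp.sum_add_sum_add_sum_eq_zero_iff (hs ▸ even_two) (ht ▸ even_two) (hu ▸ even_two) hstu,
    symmDiff_eq_iff_card_union_eq_three hs ht hu hst hsu htu]

end HasOffQuadricSums

/-- The Klein form `Q` as a bundled quadratic form, giving access to its polar form. -/
def kleinForm : QuadraticForm (ZMod 2) (Fin 6 → ZMod 2) :=
  QuadraticMap.proj 0 1 + QuadraticMap.proj 2 3 + QuadraticMap.proj 4 5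

theorem kleinForm_apply (v : Fin 6 → ZMod 2) : kleinForm v = Q v := rfl

/-- Eight vectors whose pairwise sums are off the Klein quadric. On the last four coordinates `Q`
is the form of the hyperbolic quadric in PG(3,2), which has two mutually orthogonal external lines;
the three points of one are prefixed by `(1, 0)` and those of the other by `(0, 1)`. -/
def kleinOctad : Fin 8 → Fin 6 → ZMod 2 :=
  ![![0, 0, 0, 0, 0, 0],
    ![1, 1, 0, 0, 0, 0],
    ![1, 0, 1, 1, 0, 0],
    ![1, 0, 1, 0, 1, 1],
    ![1, 0, 0, 1, 1, 1],
    ![0, 1, 0, 0, 1, 1],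
    ![0, 1, 1, 1, 1, 0],
    ![0, 1, 1, 1, 0, 1]]

theorem hasOffQuadricSums_kleinOctad : HasOffQuadricSums kleinForm kleinOctad := by
  have h : ∀ i j, i ≠ j → Q (kleinOctad i + kleinOctad j) = 1 := by decide
  exact fun i j hij ↦ (kleinForm_apply _).trans (h i j hij)

theorem ne_zero_of_Q_eq_one {v : Fin 6 → ZMod 2} (hv : Q v = 1) : v ≠ 0 := by
  rintro rfl
  exact absurd hv (by decide)

theorem card_offQuadric : Fintype.card {v : Fin 6 → ZMod 2 // v ≠ 0 ∧ Q v = 1} = 28 := by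
  decide +kernel

/-- The off-quadric point that is the sum of the two vectors of `kleinOctad` indexed by a pair. -/
def kleinPoint (s : {s : Finset (Fin 8) // #s = 2}) :
    {v : Fin 6 → ZMod 2 // v ≠ 0 ∧ Q v = 1} :=
  have hQ : Q (∑ i ∈ s.1, kleinOctad i) = 1 := hasOffQuadricSums_kleinOctad.sum_pair_off s.2
  ⟨∑ i ∈ s.1, kleinOctad i, ne_zero_of_Q_eq_one hQ, hQ⟩

theorem kleinPoint_bijective : Function.Bijective kleinPoint := by
  refine (Fintype.bijective_iff_injective_and_card _).2 ⟨fun s t hst ↦ ?_, ?_⟩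
  · exact Subtype.ext <| hasOffQuadricSums_kleinOctad.sum_injOn_pairs (by simp) s.2 t.2
      (congrArg Subtype.val hst)
  · rw [card_offQuadric, Fintype.card_finset_len, Fintype.card_fin]
    rfl

/-- The configuration of points off the binary Klein quadric and lines external to it
is isomorphic to the combinatorial Grassmannian G₂(8): there is a bijection from the
off-quadric points to the 2-element subsets of Fin 8 carrying collinearity (a+b+c = 0)
to collinearity in G₂(8) (the union of the three pairs has cardinality 3). -/
theorem off_quadric_iso_G2_8 :
    ∃ f : {v : Fin 6 → ZMod 2 // v ≠ 0 ∧ Q v = 1} ≃ {s : Finset (Fin 8) // s.card = 2},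
      ∀ a b c : {v : Fin 6 → ZMod 2 // v ≠ 0 ∧ Q v = 1},
        a ≠ b → a ≠ c → b ≠ c →
        ((a : Fin 6 → ZMod 2) + (b : Fin 6 → ZMod 2) + (c : Fin 6 → ZMod 2) = 0 ↔
          ((f a : Finset (Fin 8)) ∪ (f b : Finset (Fin 8)) ∪ (f c : Finset (Fin 8))).card = 3) := by
  let e := Equiv.ofBijective kleinPoint kleinPoint_bijective
  refine ⟨e.symm, fun a b c hab hac hbc ↦ ?_⟩
  obtain ⟨s, rfl⟩ := e.surjective a
  obtain ⟨t, rfl⟩ := e.surjective b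
  obtain ⟨u, rfl⟩ := e.surjective c
  simp only [Equiv.symm_apply_apply]
  have val_ne {x y} (hxy : e x ≠ e y) : x.1 ≠ y.1 := fun h ↦ hxy (congrArg e (Subtype.ext h))
  exact hasOffQuadricSums_kleinOctad.sum_pairs_collinear_iff (by simp) s.2 t.2 u.2
    (val_ne hab) (val_ne hac) (val_ne hbc)
end

section
/- Each point off the quadric is contained in exactly two Conwell heptads: for every nonzero vector v of (Fin 6 → ZMod 2) with Q v = 1, the number of Conwell heptads H with v ∈ H is exactly 2. -/
/-- A Conwell heptad: a set of seven off-quadric points such that the line joining any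
two of them is external to the quadric. -/
def IsConwellHeptad (H : Finset (Fin 6 → ZMod 2)) : Prop :=
  H.card = 7 ∧ (∀ v ∈ H, v ≠ 0 ∧ Q v = 1) ∧
    ∀ a ∈ H, ∀ b ∈ H, a ≠ b → Q (a + b) = 1

instance : DecidablePred IsConwellHeptad := fun H => by
  unfold IsConwellHeptad; infer_instance

/-!
Put `d(x, y) = q (x + y)` on a quadratic space over `GF(2)`. If eight vectors `c i` have all their
mutual values `d` equal to `1`, then `c i + c j + c k + c l` is singular for distinct indices, so
the `28` sums `c i + c j` are pairwise distinct, and they exhaust the `28` points off `Q⁺(5,2)`.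
Two such points span an external line exactly when their index pairs meet, so Conwell heptads
become families of seven pairwise meeting pairs from eight symbols. Apart from the triangles
`{ij, jk, ik}`, which are too small, such families consist of pairs through a common symbol,
and the point `c i + c j` lies on precisely the two stars at `i` and at `j`.
-/

section PairStar

variable {ι M : Type*} [Fintype ι] [DecidableEq ι] [AddCommMagma M] [DecidableEq M] {c : ι → M}

/-- The points `c i + c j`, `j ≠ i`, whose index pairs pass through `i`; for an equilateral family
of eight vectors (`IsEquilateral`) these are the Conwell heptads. -/
def pairStar (c : ι → M) (i : ι) : Finset M :=
  ({i}ᶜ : Finset ι).image fun j => c i + c j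

lemma mem_pairStar {i : ι} {a : M} : a ∈ pairStar c i ↔ ∃ j, i ≠ j ∧ c i + c j = a := by
  simp [pairStar, eq_comm]

lemma add_mem_pairStar_left {i j : ι} (hij : i ≠ j) : c i + c j ∈ pairStar c i :=
  mem_pairStar.mpr ⟨j, hij, rfl⟩

lemma add_mem_pairStar_right {i j : ι} (hij : i ≠ j) : c i + c j ∈ pairStar c j :=
  mem_pairStar.mpr ⟨i, hij.symm, add_comm _ _⟩

end PairStar

section QuadraticSpace

variable {M : Type*} [AddCommGroup M] [Module (ZMod 2) M] {q : QuadraticForm (ZMod 2) M}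

lemma apply_add_add_eq_zero {a b d : M} (ha : q a = 1) (hb : q b = 1) (hd : q d = 1)
    (hab : q (a + b) = 1) (hbd : q (b + d) = 1) (hda : q (d + a) = 1) : q (a + b + d) = 0 := by
  have key := q.map_add_add_add_map a b d
  rw [ha, hb, hd, hab, hbd, hda] at key
  exact add_eq_right.mp key

/-- A set of nonsingular points any two of which span a line external to the quadric `q = 0`;
the Conwell heptads are the seven-element ones for the form `Q`. -/
def IsExternalClique (q : QuadraticForm (ZMod 2) M) (H : Finset M) : Prop :=
  (∀ a ∈ H, q a = 1) ∧ (H : Set M).Pairwise fun a b => q (a + b) = 1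

lemma IsExternalClique.card_le_three {H : Finset M} (hH : IsExternalClique q H)
    {a b : M} (ha : a ∈ H) (hb : b ∈ H) (hab : a ≠ b) (habH : a + b ∈ H) : H.card ≤ 3 := by
  classical
  suffices H ⊆ {a, b, a + b} from (Finset.card_le_card this).trans Finset.card_le_three
  intro d hd
  by_contra hd'
  simp only [Finset.mem_insert, Finset.mem_singleton, not_or] at hd'
  obtain ⟨hda, hdb, hdab⟩ := hd'
  have hzero : q (a + b + d) = 0 :=
    apply_add_add_eq_zero (hH.1 a ha) (hH.1 b hb) (hH.1 d hd)
      (hH.2 ha hb hab) (hH.2 hb hd (Ne.symm hdb)) (hH.2 hd ha hda)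
  exact zero_ne_one (hzero.symm.trans (hH.2 habH hd (Ne.symm hdab)))

variable {ι : Type*} {c : ι → M}

/-- A family of vectors at mutual "distance" `q (x + y) = 1`, modelling the points off the quadric
by pairs of indices `i ≠ j`, through the sums `c i + c j`. -/
def IsEquilateral (q : QuadraticForm (ZMod 2) M) (c : ι → M) : Prop :=
  Pairwise fun i j => q (c i + c j) = 1

namespace IsEquilateral

lemma injective (hc : IsEquilateral q c) : Function.Injective c := by
  intro i j hij
  by_contra hne
  have h : q (c i + c j) = 1 := hc hne
  rw [hij, ZModModule.add_self, q.map_zero] at h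
  exact zero_ne_one h

lemma apply_add_add_add (hc : IsEquilateral q c) {i j k l : ι} (hij : i ≠ j) (hik : i ≠ k)
    (hil : i ≠ l) (hjk : j ≠ k) (hjl : j ≠ l) (hkl : k ≠ l) :
    q (c i + c j + (c k + c l)) = 0 := by
  -- Rewrite the sum as that of `c i + c l`, `c j + c l`, `c k + c l`, joined by external lines.
  have cancel (x y z : M) : x + z + (y + z) = x + y := by
    rw [add_add_add_comm, ZModModule.add_self, add_zero]
  have hsum : c i + c l + (c j + c l) + (c k + c l) = c i + c j + (c k + c l) := by rw [cancel]
  rw [← hsum]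
  refine apply_add_add_eq_zero (hc hil) (hc hjl) (hc hkl) ?_ ?_ ?_ <;> rw [cancel]
  exacts [hc hij, hc hjk, hc hik.symm]

lemma eq_or_eq_of_add_eq_add [Fintype ι] (hc : IsEquilateral q c) (hι : 4 < Fintype.card ι)
    {i j k l : ι} (hij : i ≠ j) (h : c i + c j = c k + c l) : k = i ∨ k = j := by
  classical
  by_contra! hk
  obtain ⟨m, -, hm⟩ := Finset.exists_mem_notMem_of_card_lt_card (s := {i, j, k, l})
    (t := Finset.univ) (Finset.card_le_four.trans_lt hι)
  simp only [Finset.mem_insert, Finset.mem_singleton, not_or] at hm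
  obtain ⟨hmi, hmj, hmk, hml⟩ := hm
  have hzero : q (c i + c j + (c k + c m)) = 0 :=
    hc.apply_add_add_add hij hk.1.symm (Ne.symm hmi) hk.2.symm (Ne.symm hmj) (Ne.symm hmk)
  have hone : q (c l + c m) = 1 := hc (Ne.symm hml)
  rw [h, add_add_add_comm, ZModModule.add_self, zero_add, hone] at hzero
  exact one_ne_zero hzero

lemma sum_injOn_powersetCard_two [Fintype ι] (hc : IsEquilateral q c)
    (hι : 4 < Fintype.card ι) :
    Set.InjOn (fun s : Finset ι => ∑ i ∈ s, c i)
      (Finset.powersetCard 2 Finset.univ : Finset (Finset ι)) := by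
  classical
  intro s hs t ht hst
  have hs2 := (Finset.mem_powersetCard.mp hs).2
  have ht2 := (Finset.mem_powersetCard.mp ht).2
  obtain ⟨i, j, hij, rfl⟩ := Finset.card_eq_two.mp hs2
  obtain ⟨k, l, hkl, rfl⟩ := Finset.card_eq_two.mp ht2
  have h : c i + c j = c k + c l := by
    simpa only [Finset.sum_pair hij, Finset.sum_pair hkl] using hst
  have hk := hc.eq_or_eq_of_add_eq_add hι hij h
  have hl := hc.eq_or_eq_of_add_eq_add hι hij (h.trans (add_comm _ _))
  refine (Finset.eq_of_subset_of_card_le ?_ (hs2.trans ht2.symm).le).symm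
  simpa [Finset.insert_subset_iff] using ⟨hk, hl⟩

lemma exists_add_eq [Fintype ι] [Fintype M] (hc : IsEquilateral q c)
    (hι : 4 < Fintype.card ι)
    (hcount : (Finset.univ.filter fun v => q v = 1).card = (Fintype.card ι).choose 2)
    {v : M} (hv : q v = 1) : ∃ i j, i ≠ j ∧ c i + c j = v := by
  classical
  have hmaps : Set.MapsTo (fun s : Finset ι => ∑ i ∈ s, c i)
      (Finset.powersetCard 2 Finset.univ : Finset (Finset ι))
      (Finset.univ.filter fun v => q v = 1 : Finset M) := by
    intro s hs
    obtain ⟨i, j, hij, rfl⟩ := Finset.card_eq_two.mp (Finset.mem_powersetCard.mp hs).2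
    simpa [Finset.sum_pair hij] using hc hij
  have hsurj := Finset.surjOn_of_injOn_of_card_le _ hmaps (hc.sum_injOn_powersetCard_two hι)
    (by rw [hcount, Finset.card_powersetCard, Finset.card_univ])
  obtain ⟨s, hs, hsv⟩ := hsurj (by simpa using hv : v ∈ _)
  obtain ⟨i, j, hij, rfl⟩ := Finset.card_eq_two.mp (Finset.mem_powersetCard.mp hs).2
  exact ⟨i, j, hij, (Finset.sum_pair hij).symm.trans hsv⟩

variable [Fintype ι] [DecidableEq ι] [DecidableEq M]

lemma card_pairStar (hc : IsEquilateral q c) (i : ι) :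
    (pairStar c i).card = Fintype.card ι - 1 := by
  have hinj : Function.Injective fun j => c i + c j := (add_right_injective (c i)).comp hc.injective
  rw [pairStar, Finset.card_image_of_injective _ hinj, Finset.card_compl, Finset.card_singleton]

lemma isExternalClique_pairStar (hc : IsEquilateral q c) (i : ι) :
    IsExternalClique q (pairStar c i) := by
  constructor
  · intro a ha
    obtain ⟨j, hij, rfl⟩ := mem_pairStar.mp ha
    exact hc hij
  · intro a ha b hb hab
    obtain ⟨j, -, rfl⟩ := mem_pairStar.mp ha
    obtain ⟨k, -, rfl⟩ := mem_pairStar.mp hb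
    have hjk : j ≠ k := fun h => hab (by rw [h])
    simpa only [add_add_add_comm, ZModModule.add_self, zero_add] using hc hjk

lemma pairStar_injective (hc : IsEquilateral q c) (hι : 4 < Fintype.card ι) :
    Function.Injective (pairStar c) := by
  intro i j hstar
  by_contra hij
  obtain ⟨k, -, hk⟩ := Finset.exists_mem_notMem_of_card_lt_card (s := {i, j})
    (t := Finset.univ) (Finset.card_le_two.trans_lt (by rw [Finset.card_univ]; omega))
  simp only [Finset.mem_insert, Finset.mem_singleton, not_or] at hk
  obtain ⟨hki, hkj⟩ := hk
  have hmem : c i + c k ∈ pairStar c j := hstar ▸ add_mem_pairStar_left (Ne.symm hki)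
  obtain ⟨l, -, hl⟩ := mem_pairStar.mp hmem
  rcases hc.eq_or_eq_of_add_eq_add hι (Ne.symm hki) hl.symm with hji | hjk
  exacts [hij hji.symm, hkj hjk.symm]

lemma mem_pairStar_or_mem_pairStar (hc : IsEquilateral q c) {i j k l : ι} (hij : i ≠ j)
    (hkl : k ≠ l) (h : q (c k + c l + (c i + c j)) = 1) :
    c k + c l ∈ pairStar c i ∨ c k + c l ∈ pairStar c j := by
  by_cases hki : k = i
  · exact .inl (hki ▸ add_mem_pairStar_left hkl)
  by_cases hkj : k = j
  · exact .inr (hkj ▸ add_mem_pairStar_left hkl)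
  by_cases hli : l = i
  · exact .inl (hli ▸ add_mem_pairStar_right hkl)
  by_cases hlj : l = j
  · exact .inr (hlj ▸ add_mem_pairStar_right hkl)
  rw [hc.apply_add_add_add hkl hki hkj hli hlj hij] at h
  exact absurd h zero_ne_one

lemma add_eq_of_mem_pairStar (hc : IsEquilateral q c) {i j : ι} (hij : i ≠ j) {a b : M}
    (ha : a ∈ pairStar c i) (hb : b ∈ pairStar c j) (haj : a ∉ pairStar c j)
    (hbi : b ∉ pairStar c i) (hab : q (a + b) = 1) : a + b = c i + c j := by
  obtain ⟨k, hik, rfl⟩ := mem_pairStar.mp ha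
  obtain ⟨l, hjl, rfl⟩ := mem_pairStar.mp hb
  have hjk : j ≠ k := by rintro rfl; exact haj (add_mem_pairStar_right hik)
  have hil : i ≠ l := by rintro rfl; exact hbi (add_mem_pairStar_right hjl)
  have hkl : k = l := by
    by_contra hkl
    rw [hc.apply_add_add_add hik hij hil hjk.symm hkl hjl] at hab
    exact zero_ne_one hab
  rw [hkl, add_add_add_comm, ZModModule.add_self, add_zero]

lemma subset_pairStar_or_subset_pairStar (hc : IsEquilateral q c)
    (hcover : ∀ v, q v = 1 → ∃ i j, i ≠ j ∧ c i + c j = v) {H : Finset M}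
    (hH : IsExternalClique q H) (hcard : 3 < H.card) {i j : ι} (hij : i ≠ j)
    (hmem : c i + c j ∈ H) : H ⊆ pairStar c i ∨ H ⊆ pairStar c j := by
  have hstar : ∀ a ∈ H, a ∈ pairStar c i ∨ a ∈ pairStar c j := by
    intro a ha
    by_cases hav : a = c i + c j
    · exact .inl (hav ▸ add_mem_pairStar_left hij)
    obtain ⟨k, l, hkl, rfl⟩ := hcover a (hH.1 a ha)
    exact hc.mem_pairStar_or_mem_pairStar hij hkl (hH.2 ha hmem hav)
  by_contra! hnot
  obtain ⟨b, hb, hbi⟩ := Finset.not_subset.mp hnot.1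
  obtain ⟨a, ha, haj⟩ := Finset.not_subset.mp hnot.2
  have hai := (hstar a ha).resolve_right haj
  have hbj := (hstar b hb).resolve_left hbi
  have hab : a ≠ b := fun h => haj (h ▸ hbj)
  have hline : a + b = c i + c j := hc.add_eq_of_mem_pairStar hij hai hbj haj hbi (hH.2 ha hb hab)
  exact hcard.not_ge (hH.card_le_three ha hb hab (hline ▸ hmem))

theorem isExternalClique_and_add_mem_iff (hc : IsEquilateral q c)
    (hι : 4 < Fintype.card ι) (hcover : ∀ v, q v = 1 → ∃ i j, i ≠ j ∧ c i + c j = v)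
    {i j : ι} (hij : i ≠ j) {H : Finset M} :
    (H.card = Fintype.card ι - 1 ∧ IsExternalClique q H) ∧ c i + c j ∈ H ↔
      H = pairStar c i ∨ H = pairStar c j := by
  constructor
  · rintro ⟨⟨hcard, hH⟩, hmem⟩
    refine (hc.subset_pairStar_or_subset_pairStar hcover hH (by omega) hij hmem).imp ?_ ?_ <;>
      exact fun hsub => Finset.eq_of_subset_of_card_le hsub (by rw [hc.card_pairStar, hcard])
  · rintro (rfl | rfl)
    · exact ⟨⟨hc.card_pairStar i, hc.isExternalClique_pairStar i⟩, add_mem_pairStar_left hij⟩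
    · exact ⟨⟨hc.card_pairStar j, hc.isExternalClique_pairStar j⟩, add_mem_pairStar_right hij⟩

end IsEquilateral

end QuadraticSpace

/-- The form `Q` as a bundled `QuadraticForm`, to which the theory of quadratic maps applies. -/
def hyperbolicForm : QuadraticForm (ZMod 2) (Fin 6 → ZMod 2) :=
  QuadraticMap.proj 0 1 + QuadraticMap.proj 2 3 + QuadraticMap.proj 4 5

lemma hyperbolicForm_apply (v : Fin 6 → ZMod 2) : hyperbolicForm v = Q v := rfl

lemma isConwellHeptad_iff {H : Finset (Fin 6 → ZMod 2)} :
    IsConwellHeptad H ↔ H.card = 7 ∧ IsExternalClique hyperbolicForm H := by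
  have ne_zero {v : Fin 6 → ZMod 2} (hv : Q v = 1) : v ≠ 0 := by
    rintro rfl
    exact zero_ne_one (hyperbolicForm.map_zero.symm.trans hv)
  refine and_congr_right fun _ => and_congr_left fun _ => forall₂_congr fun v _ => ?_
  exact ⟨And.right, fun hv => ⟨ne_zero hv, hv⟩⟩

lemma card_filter_hyperbolicForm_eq_one :
    (Finset.univ.filter fun v => hyperbolicForm v = 1).card = 28 := by
  simp only [hyperbolicForm_apply]
  decide +kernel

/-- Eight equilateral vectors for `Q`. In the sum of three hyperbolic planes write `e = (1, 0)`,
`f = (0, 1)` and `g = e + f`, the only nonsingular vector of a plane: the octad consists of `0`,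
`(g, g, g)` and the cyclic shifts of `(g, 0, e)` and `(g, 0, f)`. -/
def octad : Fin 8 → Fin 6 → ZMod 2 :=
  ![![0, 0, 0, 0, 0, 0], ![1, 1, 1, 1, 1, 1],
    ![1, 1, 0, 0, 1, 0], ![1, 0, 1, 1, 0, 0], ![0, 0, 1, 0, 1, 1],
    ![1, 1, 0, 0, 0, 1], ![0, 1, 1, 1, 0, 0], ![0, 0, 0, 1, 1, 1]]

lemma isEquilateral_octad : IsEquilateral hyperbolicForm octad := by
  have : ∀ i j, i ≠ j → Q (octad i + octad j) = 1 := by decide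
  exact fun i j => this i j

lemma exists_octad_add_eq (v : Fin 6 → ZMod 2) (hv : hyperbolicForm v = 1) :
    ∃ i j, i ≠ j ∧ octad i + octad j = v :=
  isEquilateral_octad.exists_add_eq (by simp) card_filter_hyperbolicForm_eq_one hv

/-- Each point off the quadric lies in exactly two Conwell heptads. -/
theorem point_in_two_conwell_heptads (v : Fin 6 → ZMod 2) (hv : v ≠ 0) (hQ : Q v = 1) :
    (Finset.univ.filter (fun H : Finset (Fin 6 → ZMod 2) =>
      IsConwellHeptad H ∧ v ∈ H)).card = 2 := by
  obtain ⟨i, j, hij, rfl⟩ := exists_octad_add_eq v hQ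
  have heptads_eq : (Finset.univ.filter fun H : Finset (Fin 6 → ZMod 2) =>
      IsConwellHeptad H ∧ octad i + octad j ∈ H) = {pairStar octad i, pairStar octad j} := by
    ext H
    simp only [Finset.mem_filter_univ, Finset.mem_insert, Finset.mem_singleton,
      isConwellHeptad_iff]
    exact isEquilateral_octad.isExternalClique_and_add_mem_iff (by simp) exists_octad_add_eq hij
  rw [heptads_eq]
  exact Finset.card_pair ((isEquilateral_octad.pairStar_injective (by simp)).ne hij)
end
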